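/- Let O ⊆ ℝ² be a nonempty bounded, simply connected open set with C^∞ smooth boundary, let λ > 0, and let u : ℝ² → ℝ be continuous on the closure of O, continuously differentiable up to the boundary, twice continuously differentiable in O, with Δu = −λu and u > 0 in O and u = 0 on ∂O. Then ∫_O u² dA ≤ (λ/(4π)) · (∫_O u dA)². (This is the Euclidean case τ = 4π of the eigenfunction inequality (2.6) in Remark 2.2(ii).) -/

import Mathlib

open MeasureTheory Real

/-- The Euclidean Laplacian on `ℝ²` (realized as `EuclideanSpace ℝ (Fin 2)`). -/
noncomputable def lap (u : EuclideanSpace ℝ (Fin 2) → ℝ) (x : EuclideanSpace ℝ (Fin 2)) : ℝ :=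
  ∑ i : Fin 2, fderiv ℝ (fderiv ℝ u) x (EuclideanSpace.single i 1) (EuclideanSpace.single i 1)

/-- `O` has `C^∞` smooth boundary: near each boundary point, `O` is the sublevel set of a
smooth function with nonvanishing gradient. -/
def SmoothBoundary (O : Set (EuclideanSpace ℝ (Fin 2))) : Prop :=
  ∀ x ∈ frontier O, ∃ (U : Set (EuclideanSpace ℝ (Fin 2))) (φ : EuclideanSpace ℝ (Fin 2) → ℝ),
    IsOpen U ∧ x ∈ U ∧ ContDiff ℝ (⊤ : ℕ∞) φ ∧ (∀ y ∈ U, fderiv ℝ φ y ≠ 0) ∧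
      O ∩ U = {y | φ y < 0} ∩ U

/-!
The sharp Sobolev inequality `4π ∫ f² ≤ (∫ ‖∇f‖)²` in the plane follows from mass transport: the
Knothe map `T` carrying the density `f²` to the uniform density of the unit disc satisfies
`div T ≥ 2 √(det DT)`, while `∫ f div T = -∫ ∇f · T ≤ ∫ ‖∇f‖` because `T` takes values in the disc.

Apply it to `φ (u - t)`, a smoothing of the indicator of the superlevel set `{u > t}` of the
eigenfunction. A weighted Cauchy-Schwarz inequality and Green's identity
`∫ φ' (u - t) ‖∇u‖² = lam ∫ φ (u - t) u` give
`4π ∫ φ (u - t)² ≤ lam (∫ φ (u - t) u) (∫ φ' (u - t))`.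
Since `t ∫ φ' (u - t) ≤ ∫ φ' (u - t) u = -d/dt ∫ φ (u - t) u`, multiplying by `t` makes the right
side at most `-(lam / 2) d/dt (∫ φ (u - t) u)²`. Integrate over `t > 0`, where
`∫ t φ (u - t)² dt ≈ u² / 2`, and let `φ` tend to the Heaviside function.
-/

open Set Filter Function Module
open scoped Topology InnerProductSpace Gradient Laplacian

/-! ### Parametric integrals -/

section Parametric

variable {E : Type*} [NormedAddCommGroup E] [NormedSpace ℝ E]

lemma hasDerivAt_parametric_setIntegral_of_continuous {Y : Type*} [TopologicalSpace Y]
    [MeasurableSpace Y] [OpensMeasurableSpace Y] [SecondCountableTopologyEither Y E]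
    {μ : Measure Y} [IsFiniteMeasureOnCompacts μ] {F F' : ℝ → Y → E} (hF : Continuous (uncurry F))
    (hF' : Continuous (uncurry F')) (hFF' : ∀ t y, HasDerivAt (F · y) (F' t y) t)
    {s : Set Y} (hs : IsCompact s) (hsm : MeasurableSet s) (t : ℝ) :
    HasDerivAt (fun t ↦ ∫ y in s, F t y ∂μ) (∫ y in s, F' t y ∂μ) t := by
  obtain ⟨C, hC⟩ := ((isCompact_closedBall t 1).prod hs).exists_bound_of_continuousOn
    hF'.continuousOn
  refine (hasDerivAt_integral_of_dominated_loc_of_deriv_le (bound := fun _ ↦ C)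
    (Metric.closedBall_mem_nhds t one_pos) (.of_forall fun t ↦ ?_) ?_ ?_ ?_
    (integrableOn_const hs.measure_ne_top) (.of_forall fun y t _ ↦ hFF' t y)).2
  · exact (hF.comp (.prodMk_right t)).aestronglyMeasurable
  · exact (hF.comp (.prodMk_right t)).continuousOn.integrableOn_of_subset_isCompact hs hsm
      subset_rfl hs.measure_ne_top
  · exact (hF'.comp (.prodMk_right t)).aestronglyMeasurable
  · filter_upwards [ae_restrict_mem hsm] with y hy t ht using hC (t, y) ⟨ht, hy⟩

lemma hasDerivAt_parametric_integral_of_continuous {Y : Type*} [TopologicalSpace Y]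
    [MeasurableSpace Y] [OpensMeasurableSpace Y] [SecondCountableTopologyEither Y E]
    {μ : Measure Y} [IsFiniteMeasureOnCompacts μ] {F F' : ℝ → Y → E} (hF : Continuous (uncurry F))
    (hF' : Continuous (uncurry F')) (hFF' : ∀ t y, HasDerivAt (F · y) (F' t y) t)
    {s : Set Y} (hs : IsCompact s) (hsm : MeasurableSet s) (hs0 : ∀ t, ∀ y ∉ s, F t y = 0) (t : ℝ) :
    HasDerivAt (fun t ↦ ∫ y, F t y ∂μ) (∫ y, F' t y ∂μ) t := by
  have hs0' : ∀ y ∉ s, F' t y = 0 := fun y hy ↦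
    (hFF' t y).unique (by simpa only [hs0 _ y hy] using hasDerivAt_const t (0 : E))
  simpa only [setIntegral_eq_integral_of_forall_compl_eq_zero (hs0 _),
    setIntegral_eq_integral_of_forall_compl_eq_zero hs0'] using
    hasDerivAt_parametric_setIntegral_of_continuous (μ := μ) hF hF' hFF' hs hsm t

lemma hasDerivAt_parametric_intervalIntegral_of_continuous {F F' : ℝ → ℝ → E}
    (hF : Continuous (uncurry F)) (hF' : Continuous (uncurry F'))
    (hFF' : ∀ t y, HasDerivAt (F · y) (F' t y) t) (a b t : ℝ) :
    HasDerivAt (fun t ↦ ∫ y in a..b, F t y) (∫ y in a..b, F' t y) t := by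
  have h (c d : ℝ) : HasDerivAt (fun t ↦ ∫ y in Icc c d, F t y) (∫ y in Icc c d, F' t y) t :=
    hasDerivAt_parametric_setIntegral_of_continuous hF hF' hFF' isCompact_Icc measurableSet_Icc t
  simpa only [intervalIntegral, ← integral_Icc_eq_integral_Ioc] using (h a b).fun_sub (h b a)

end Parametric

/-! ### Disc segments -/

section DiscSegment

/-- The fraction of the area of the unit disc lying in the segment `{(x, y) | x < -cos θ}`,
for `θ ∈ [0, π]`. The formula is strictly increasing on all of `ℝ`, which lets us invert it
globally. -/
noncomputable def discSegmentFraction (θ : ℝ) : ℝ := (2 * θ - sin (2 * θ)) / (2 * π)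

lemma strictMono_sub_sin : StrictMono fun t : ℝ ↦ t - sin t := by
  intro a b hab
  have hlt : |sin ((b - a) / 2)| < (b - a) / 2 := by
    simpa only [abs_of_pos (half_pos (sub_pos.2 hab))] using
      abs_sin_lt_abs (half_pos (sub_pos.2 hab)).ne'
  have hle : sin ((b - a) / 2) * cos ((b + a) / 2) ≤ |sin ((b - a) / 2)| :=
    (le_abs_self _).trans <| (abs_mul _ _).trans_le <|
      mul_le_of_le_one_right (abs_nonneg _) (abs_cos_le_one _)
  change a - sin a < b - sin b
  linarith [sin_sub_sin b a]

lemma surjective_sub_sin : Surjective fun t : ℝ ↦ t - sin t := by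
  have hcont : Continuous fun t : ℝ ↦ t - sin t := by fun_prop
  refine hcont.surjective ?_ ?_
  · exact tendsto_atTop_mono (f := fun t : ℝ ↦ t + -1) (fun t ↦ by linarith [sin_le_one t])
      (tendsto_atTop_add_const_right _ (-1) tendsto_id)
  · exact tendsto_atBot_mono (f := fun t : ℝ ↦ t + 1) (fun t ↦ by linarith [neg_one_le_sin t])
      (tendsto_atBot_add_const_right _ 1 tendsto_id)

lemma strictMono_discSegmentFraction : StrictMono discSegmentFraction := fun a b hab ↦
  div_lt_div_of_pos_right (strictMono_sub_sin (by linarith)) (by positivity)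

lemma surjective_discSegmentFraction : Surjective discSegmentFraction := fun r ↦ by
  obtain ⟨t, ht⟩ := surjective_sub_sin (2 * π * r)
  refine ⟨t / 2, ?_⟩
  rw [discSegmentFraction, mul_div_cancel₀ t two_ne_zero]
  exact (div_eq_iff (by positivity)).2 (ht.trans (mul_comm _ _))

lemma hasDerivAt_discSegmentFraction (θ : ℝ) :
    HasDerivAt discSegmentFraction (2 * sin θ ^ 2 / π) θ := by
  have h2 : HasDerivAt (fun t : ℝ ↦ 2 * t) 2 θ := by simpa using (hasDerivAt_id θ).const_mul 2
  refine ((h2.sub h2.sin).div_const (2 * π)).congr_deriv ?_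
  rw [sin_sq_eq_half_sub]
  field_simp

/-- The angle `θ` for which the segment `{(x, y) | x < -cos θ}` fills a given fraction of the unit
disc; as the inverse of `discSegmentFraction` it is defined for all real fractions. -/
noncomputable def discSegmentAngle : ℝ ≃o ℝ :=
  (strictMono_discSegmentFraction.orderIsoOfSurjective _ surjective_discSegmentFraction).symm

lemma discSegmentFraction_discSegmentAngle (r : ℝ) :
    discSegmentFraction (discSegmentAngle r) = r :=
  (strictMono_discSegmentFraction.orderIsoOfSurjective _
    surjective_discSegmentFraction).apply_symm_apply r

lemma sin_discSegmentAngle_pos {r : ℝ} (hr : r ∈ Ioo 0 1) : 0 < sin (discSegmentAngle r) := by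
  refine sin_pos_of_pos_of_lt_pi ?_ ?_ <;>
    rw [← strictMono_discSegmentFraction.lt_iff_lt, discSegmentFraction_discSegmentAngle]
  · simpa [discSegmentFraction] using hr.1
  · simpa [discSegmentFraction, pi_ne_zero] using hr.2

lemma hasDerivAt_neg_cos_discSegmentAngle {r : ℝ} (hr : r ∈ Ioo 0 1) :
    HasDerivAt (fun r ↦ -cos (discSegmentAngle r)) (π / (2 * sin (discSegmentAngle r))) r := by
  have hsin := sin_discSegmentAngle_pos hr
  have hθ : HasDerivAt discSegmentAngle (2 * sin (discSegmentAngle r) ^ 2 / π)⁻¹ r :=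
    (hasDerivAt_discSegmentFraction _).of_local_left_inverse
      discSegmentAngle.continuous.continuousAt (by positivity)
      (.of_forall discSegmentFraction_discSegmentAngle)
  refine hθ.cos.neg.congr_deriv ?_
  field_simp

end DiscSegment

/-! ### The sharp planar Sobolev inequality -/

section Transport

/-- The first coordinate of the Knothe map onto the unit disc: the mass fraction of the density `m`
to the left of `x` (relative to `[a, b]`) equals the area fraction of the unit disc to the left of
`knotheCoord m a b x`. -/
noncomputable def knotheCoord (m : ℝ → ℝ) (a b x : ℝ) : ℝ :=
  -cos (discSegmentAngle ((∫ t in a..x, m t) / ∫ t in a..b, m t))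

lemma abs_knotheCoord_le_one (m : ℝ → ℝ) (a b x : ℝ) : |knotheCoord m a b x| ≤ 1 := by
  simpa only [knotheCoord, abs_neg] using abs_cos_le_one _

lemma continuous_knotheCoord {m : ℝ → ℝ} (hm : Continuous m) (a b : ℝ) :
    Continuous (knotheCoord m a b) :=
  (continuous_cos.comp <| discSegmentAngle.continuous.comp <|
    (intervalIntegral.continuous_primitive hm.intervalIntegrable a).div_const _).neg

lemma exists_hasDerivAt_knotheCoord {m : ℝ → ℝ} (hm : Continuous m) (hm0 : ∀ x, 0 ≤ m x)
    {a b x : ℝ} (hx : x ∈ Ioo a b) (hmx : 0 < m x) :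
    ∃ s > 0, knotheCoord m a b x ^ 2 + s ^ 2 = 1 ∧
      HasDerivAt (knotheCoord m a b) (π * m x / (2 * s * ∫ t in a..b, m t)) x := by
  have hleft : 0 < ∫ t in a..x, m t := intervalIntegral.integral_pos hx.1 hm.continuousOn
    (fun t _ ↦ hm0 t) ⟨x, right_mem_Icc.2 hx.1.le, hmx⟩
  have hright : 0 < ∫ t in x..b, m t := intervalIntegral.integral_pos hx.2 hm.continuousOn
    (fun t _ ↦ hm0 t) ⟨x, left_mem_Icc.2 hx.2.le, hmx⟩
  have hadd : (∫ t in a..x, m t) + ∫ t in x..b, m t = ∫ t in a..b, m t :=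
    intervalIntegral.integral_add_adjacent_intervals (hm.intervalIntegrable _ _)
      (hm.intervalIntegrable _ _)
  have hM : 0 < ∫ t in a..b, m t := by linarith
  have hr : (∫ t in a..x, m t) / (∫ t in a..b, m t) ∈ Ioo 0 1 :=
    ⟨div_pos hleft hM, (div_lt_one hM).2 (by linarith)⟩
  refine ⟨_, sin_discSegmentAngle_pos hr, by rw [knotheCoord, neg_sq, cos_sq_add_sin_sq], ?_⟩
  refine ((hasDerivAt_neg_cos_discSegmentAngle hr).comp x
    ((hm.integral_hasStrictDerivAt a x).hasDerivAt.div_const _)).congr_deriv ?_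
  rw [div_mul_div_comm]

/-- AM-GM bounds the divergence `h + ρ f²` of the Knothe map from below, Cauchy-Schwarz bounds the
pairing of `(p, q)` with the vector `(ξ, k)` of the unit disc. -/
lemma two_mul_sqrt_mul_sq_sub_sqrt_le {f p q ξ k h ρ : ℝ} (hf : 0 ≤ f) (hh : 0 ≤ h) (hρ : 0 ≤ ρ)
    (hξk : ξ ^ 2 + k ^ 2 ≤ 1) :
    2 * √(h * ρ) * f ^ 2 - √(p ^ 2 + q ^ 2) ≤ ξ * p + h * f + (q * k + f * (ρ * f ^ 2)) := by
  have hamgm : 2 * √(h * ρ) * f ≤ h + ρ * f ^ 2 := by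
    have := two_mul_le_add_sq (√h) (√ρ * f)
    rw [mul_pow, sq_sqrt hh, sq_sqrt hρ] at this
    rw [sqrt_mul hh]
    linarith
  have hcs : |ξ * p + q * k| ≤ √(p ^ 2 + q ^ 2) := by
    refine abs_le_sqrt ?_
    nlinarith [sq_nonneg (ξ * q - p * k),
      mul_nonneg (add_nonneg (sq_nonneg p) (sq_nonneg q)) (sub_nonneg.2 hξk)]
  linarith [neg_le_of_abs_le hcs, mul_le_mul_of_nonneg_right hamgm hf]

lemma sq_mul_intervalIntegral_sub_le {w : ℝ → ℝ} (hw : Continuous w) (hw0 : ∀ t, 0 ≤ w t)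
    {c d ρ s : ℝ} (hρ : 0 ≤ ρ) (hρs : ρ * ∫ t in c..d, w t = 2 * s) {y : ℝ} (hy : y ∈ Icc c d) :
    (ρ * (∫ t in c..y, w t) - s) ^ 2 ≤ s ^ 2 := by
  have hnonneg : 0 ≤ ∫ t in c..y, w t :=
    intervalIntegral.integral_nonneg hy.1 fun t _ ↦ hw0 t
  have hle : ∫ t in c..y, w t ≤ ∫ t in c..d, w t :=
    intervalIntegral.integral_mono_interval le_rfl hy.1 hy.2 (.of_forall hw0)
      (hw.intervalIntegrable _ _)
  exact sq_le_sq' (by linarith [mul_nonneg hρ hnonneg])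
    (by linarith [mul_le_mul_of_nonneg_left hle hρ])

lemma knothe_slice_inequality {f p q : ℝ → ℝ} {c d : ℝ} (hcd : c ≤ d)
    (hfq : ∀ y, HasDerivAt f (q y) y) (hp : Continuous p) (hq : Continuous q) (hf0 : ∀ y, 0 ≤ f y)
    (hfc : f c = 0) (hfd : f d = 0) (hm : 0 < ∫ y in c..d, f y ^ 2) {ξ s h : ℝ} (hs : 0 ≤ s)
    (hh : 0 ≤ h) (hξs : ξ ^ 2 + s ^ 2 ≤ 1) :
    2 * √(h * (2 * s / ∫ y in c..d, f y ^ 2)) * (∫ y in c..d, f y ^ 2)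
        - ∫ y in c..d, √(p y ^ 2 + q y ^ 2) ≤
      ξ * (∫ y in c..d, p y) + h * ∫ y in c..d, f y := by
  have hf : Continuous f := continuous_iff_continuousAt.2 fun y ↦ (hfq y).continuousAt
  have hf2 : Continuous fun y ↦ f y ^ 2 := by fun_prop
  set m := ∫ y in c..d, f y ^ 2
  set ρ := 2 * s / m
  have hρ : 0 ≤ ρ := by positivity
  have hρm : ρ * m = 2 * s := div_mul_cancel₀ _ hm.ne'
  -- The second Knothe coordinate, mapping `[c, d]` onto the chord `[-s, s]`.
  set k : ℝ → ℝ := fun y ↦ ρ * (∫ t in c..y, f t ^ 2) - s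
  have hk : ∀ y, HasDerivAt k (ρ * f y ^ 2) y := fun y ↦
    ((hf2.integral_hasStrictDerivAt c y).hasDerivAt.const_mul ρ).sub_const s
  have hkc : Continuous k := continuous_iff_continuousAt.2 fun y ↦ (hk y).continuousAt
  have hk_sq : ∀ y ∈ Icc c d, k y ^ 2 ≤ s ^ 2 := fun y hy ↦
    sq_mul_intervalIntegral_sub_le hf2 (fun t ↦ sq_nonneg _) hρ hρm hy
  have hdiv : ∫ y in c..d, (q y * k y + f y * (ρ * f y ^ 2)) = 0 := by
    rw [intervalIntegral.integral_eq_sub_of_hasDerivAt (fun y _ ↦ (hfq y).mul (hk y))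
      (by apply Continuous.intervalIntegrable; fun_prop)]
    simp [hfc, hfd]
  have hint : ∫ y in c..d, (2 * √(h * ρ) * f y ^ 2 - √(p y ^ 2 + q y ^ 2)) ≤
      ∫ y in c..d, (ξ * p y + h * f y + (q y * k y + f y * (ρ * f y ^ 2))) :=
    intervalIntegral.integral_mono_on hcd (by apply Continuous.intervalIntegrable; fun_prop)
      (by apply Continuous.intervalIntegrable; fun_prop) fun y hy ↦
      two_mul_sqrt_mul_sq_sub_sqrt_le (hf0 y) hh hρ (by linarith [hk_sq y hy])
  rwa [intervalIntegral.integral_sub, intervalIntegral.integral_add,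
    intervalIntegral.integral_add, hdiv, add_zero, intervalIntegral.integral_const_mul,
    intervalIntegral.integral_const_mul, intervalIntegral.integral_const_mul] at hint
  all_goals apply Continuous.intervalIntegrable; fun_prop

lemma neg_integral_sqrt_le_mul_integral {p q : ℝ → ℝ} {c d : ℝ} (hcd : c ≤ d) (hp : Continuous p)
    (hq : Continuous q) {ξ : ℝ} (hξ : |ξ| ≤ 1) :
    -∫ y in c..d, √(p y ^ 2 + q y ^ 2) ≤ ξ * ∫ y in c..d, p y := by
  rw [← intervalIntegral.integral_neg, ← intervalIntegral.integral_const_mul]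
  refine intervalIntegral.integral_mono_on hcd (by apply Continuous.intervalIntegrable; fun_prop)
    (by apply Continuous.intervalIntegrable; fun_prop) fun y _ ↦ ?_
  have hle : |p y| ≤ √(p y ^ 2 + q y ^ 2) := abs_le_sqrt (by linarith [sq_nonneg (q y)])
  refine neg_le_of_abs_le ((abs_mul _ _).trans_le ?_)
  exact (mul_le_of_le_one_left (abs_nonneg _) hξ).trans hle

lemma hasDerivAt_mul_of_eq_zero {𝕜 A : Type*} [NontriviallyNormedField 𝕜] [NormedRing A]
    [NormedAlgebra 𝕜 A] {f g : 𝕜 → A} {g' : A} {x : 𝕜} (hf : ContinuousAt f x)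
    (hg : HasDerivAt g g' x) (hgx : g x = 0) : HasDerivAt (fun t ↦ f t * g t) (f x * g') x := by
  rw [hasDerivAt_iff_tendsto_slope] at *
  have hslope : slope (fun t ↦ f t * g t) x = fun t ↦ f t * slope g x t := by
    ext t
    simp [slope, hgx]
  rw [hslope]
  exact (hf.tendsto.mono_left nhdsWithin_le_nhds).mul hg

lemma integral_eq_zero_of_integral_sq_eq_zero {f : ℝ → ℝ} (hf : Continuous f) {c d : ℝ}
    (hcd : c ≤ d) (h : ∫ y in c..d, f y ^ 2 = 0) : ∫ y in c..d, f y = 0 := by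
  rw [intervalIntegral.integral_eq_zero_iff_of_le_of_nonneg_ae hcd
    (.of_forall fun y ↦ sq_nonneg (f y)) ((hf.pow 2).intervalIntegrable _ _)] at h
  rw [intervalIntegral.integral_of_le hcd]
  exact integral_eq_zero_of_ae (h.mono fun y hy ↦ pow_eq_zero_iff two_ne_zero |>.1 hy)

variable {F p q : ℝ → ℝ → ℝ} {a b c d : ℝ}

lemma exists_hasDerivAt_integral_mul_knotheCoord (hcd : c ≤ d) (hF : Continuous (uncurry F))
    (hp : Continuous (uncurry p)) (hq : Continuous (uncurry q))
    (hFp : ∀ x y, HasDerivAt (F · y) (p x y) x) (hFq : ∀ x y, HasDerivAt (F x) (q x y) y)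
    (hF0 : ∀ x y, 0 ≤ F x y) (hFc : ∀ x, F x c = 0) (hFd : ∀ x, F x d = 0) {x : ℝ}
    (hx : x ∈ Ioo a b) :
    ∃ δ, HasDerivAt (fun x ↦ knotheCoord (fun x ↦ ∫ y in c..d, F x y ^ 2) a b x *
        ∫ y in c..d, F x y) δ x ∧
      2 * √(π / ∫ x in a..b, ∫ y in c..d, F x y ^ 2) * (∫ y in c..d, F x y ^ 2)
        - ∫ y in c..d, √(p x y ^ 2 + q x y ^ 2) ≤ δ := by
  have hFx : Continuous (F x) := hF.uncurry_left x
  have hpx : Continuous (p x) := hp.uncurry_left x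
  have hqx : Continuous (q x) := hq.uncurry_left x
  have hm : Continuous fun x ↦ ∫ y in c..d, F x y ^ 2 :=
    intervalIntegral.continuous_parametric_intervalIntegral_of_continuous' (hF.pow 2) c d
  have hm0 : ∀ x, 0 ≤ ∫ y in c..d, F x y ^ 2 := fun x ↦
    intervalIntegral.integral_nonneg hcd fun y _ ↦ sq_nonneg _
  have hN := hasDerivAt_parametric_intervalIntegral_of_continuous hF hp hFp c d x
  rcases (hm0 x).eq_or_lt' with hmx | hmx
  · have hNx := integral_eq_zero_of_integral_sq_eq_zero hFx hcd hmx
    refine ⟨_, hasDerivAt_mul_of_eq_zero (continuous_knotheCoord hm a b).continuousAt hN hNx, ?_⟩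
    rw [hmx, mul_zero, zero_sub]
    exact neg_integral_sqrt_le_mul_integral hcd hpx hqx (abs_knotheCoord_le_one _ a b x)
  · obtain ⟨s, hs, hξs, hξ⟩ := exists_hasDerivAt_knotheCoord hm hm0 hx hmx
    have hM := intervalIntegral.integral_pos (hx.1.trans hx.2) hm.continuousOn
      (fun t _ ↦ hm0 t) ⟨x, Ioo_subset_Icc_self hx, hmx⟩
    refine ⟨_, hξ.mul hN, ?_⟩
    have hslice := knothe_slice_inequality hcd (hFq x) hpx hqx (hF0 x) (hFc x) (hFd x) hmx hs.le
      (h := π * (∫ y in c..d, F x y ^ 2) / (2 * s * ∫ t in a..b, ∫ y in c..d, F t y ^ 2))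
      (by positivity) hξs.le
    have hprod : π * (∫ y in c..d, F x y ^ 2) / (2 * s * ∫ t in a..b, ∫ y in c..d, F t y ^ 2) *
        (2 * s / ∫ y in c..d, F x y ^ 2) = π / ∫ t in a..b, ∫ y in c..d, F t y ^ 2 := by
      field_simp
    rw [hprod] at hslice
    linarith

lemma four_pi_mul_integral_sq_le_of_rectangle (hab : a ≤ b) (hcd : c ≤ d)
    (hF : Continuous (uncurry F)) (hp : Continuous (uncurry p)) (hq : Continuous (uncurry q))
    (hFp : ∀ x y, HasDerivAt (F · y) (p x y) x) (hFq : ∀ x y, HasDerivAt (F x) (q x y) y)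
    (hF0 : ∀ x y, 0 ≤ F x y) (hFa : ∀ y, F a y = 0) (hFb : ∀ y, F b y = 0) (hFc : ∀ x, F x c = 0)
    (hFd : ∀ x, F x d = 0) :
    4 * π * ∫ x in a..b, ∫ y in c..d, F x y ^ 2 ≤
      (∫ x in a..b, ∫ y in c..d, √(p x y ^ 2 + q x y ^ 2)) ^ 2 := by
  set m : ℝ → ℝ := fun x ↦ ∫ y in c..d, F x y ^ 2
  set D : ℝ → ℝ := fun x ↦ ∫ y in c..d, √(p x y ^ 2 + q x y ^ 2)
  set M := ∫ x in a..b, m x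
  have hm : Continuous m :=
    intervalIntegral.continuous_parametric_intervalIntegral_of_continuous' (hF.pow 2) c d
  have hD : Continuous D := intervalIntegral.continuous_parametric_intervalIntegral_of_continuous'
    ((hp.pow 2).add (hq.pow 2)).sqrt c d
  have hN : Continuous fun x ↦ ∫ y in c..d, F x y :=
    intervalIntegral.continuous_parametric_intervalIntegral_of_continuous' hF c d
  have hM : 0 ≤ M := intervalIntegral.integral_nonneg hab fun x _ ↦
    intervalIntegral.integral_nonneg hcd fun y _ ↦ sq_nonneg _
  choose! δ hδ hle using fun x (hx : x ∈ Ioo a b) ↦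
    exists_hasDerivAt_integral_mul_knotheCoord hcd hF hp hq hFp hFq hF0 hFc hFd hx
  have hint := intervalIntegral.integral_le_sub_of_hasDeriv_right_of_le hab
    ((continuous_knotheCoord hm a b).mul hN).continuousOn (fun x hx ↦ (hδ x hx).hasDerivWithinAt)
    (φ := fun x ↦ 2 * √(π / M) * m x - D x)
    (by apply Continuous.integrableOn_Icc; fun_prop) hle
  have hsobolev : 2 * √(π / M) * M ≤ ∫ x in a..b, D x := by
    rw [intervalIntegral.integral_sub, intervalIntegral.integral_const_mul] at hint
    · simpa [hFa, hFb] using hint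
    all_goals apply Continuous.intervalIntegrable; fun_prop
  calc 4 * π * M = (2 * √(π / M) * M) ^ 2 := by
        rw [mul_pow, mul_pow, sq_sqrt (by positivity)]
        rcases hM.eq_or_lt with hM0 | hM0
        · simp [← hM0]
        · field_simp
          norm_num
    _ ≤ _ := pow_le_pow_left₀ (by positivity) hsobolev 2

end Transport

section Plane

variable {G : Type*} [NormedAddCommGroup G] [NormedSpace ℝ G]

lemma integral_prod_eq_intervalIntegral {f : ℝ × ℝ → G} (hf : Integrable f) {a b c d : ℝ}
    (hab : a ≤ b) (hcd : c ≤ d) (hf0 : ∀ z ∉ Ioc a b ×ˢ Ioc c d, f z = 0) :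
    ∫ z, f z = ∫ x in a..b, ∫ y in c..d, f (x, y) := by
  rw [← setIntegral_eq_integral_of_forall_compl_eq_zero hf0, Measure.volume_eq_prod,
    setIntegral_prod _ hf.integrableOn, intervalIntegral.integral_of_le hab]
  simp only [intervalIntegral.integral_of_le hcd]

variable {E : Type*} [NormedAddCommGroup E] [InnerProductSpace ℝ E]

lemma abs_le_norm_smul_add_smul (b : OrthonormalBasis (Fin 2) ℝ E) (x y : ℝ) :
    |x| ≤ ‖x • b 0 + y • b 1‖ ∧ |y| ≤ ‖x • b 0 + y • b 1‖ := by
  have h (i : Fin 2) : |b.repr (x • b 0 + y • b 1) i| ≤ ‖x • b 0 + y • b 1‖ :=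
    (PiLp.norm_apply_le (b.repr _) i).trans_eq (b.repr.norm_map _)
  exact ⟨by simpa using h 0, by simpa using h 1⟩

variable [FiniteDimensional ℝ E] [MeasurableSpace E] [BorelSpace E]

lemma integral_eq_integral_prod_orthonormalBasis (b : OrthonormalBasis (Fin 2) ℝ E) (f : E → G) :
    ∫ x, f x = ∫ z : ℝ × ℝ, f (z.1 • b 0 + z.2 • b 1) := by
  rw [← b.measurePreserving_repr_symm.integral_comp b.repr.symm.toHomeomorph.measurableEmbedding,
    ← (PiLp.volume_preserving_toLp (Fin 2)).integral_comp
      (MeasurableEquiv.toLp 2 (Fin 2 → ℝ)).measurableEmbedding,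
    ← (volume_preserving_finTwoArrow ℝ).symm.integral_comp
      MeasurableEquiv.finTwoArrow.symm.measurableEmbedding]
  simp [← b.sum_repr_symm, Fin.sum_univ_two]

lemma integral_eq_intervalIntegral_orthonormalBasis (b : OrthonormalBasis (Fin 2) ℝ E) {f : E → G}
    (hf : Continuous f) {r : ℝ} (hr : 0 ≤ r) (hf0 : ∀ x, r ≤ ‖x‖ → f x = 0) :
    ∫ x, f x = ∫ x in -r..r, ∫ y in -r..r, f (x • b 0 + y • b 1) := by
  rw [integral_eq_integral_prod_orthonormalBasis b]
  have hout : ∀ z ∉ Ioo (-r) r ×ˢ Ioo (-r) r, f (z.1 • b 0 + z.2 • b 1) = 0 := fun z hz ↦ by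
    refine hf0 _ (not_lt.1 fun h ↦ hz ?_)
    obtain ⟨hx, hy⟩ := abs_le_norm_smul_add_smul b z.1 z.2
    exact ⟨abs_lt.1 (hx.trans_lt h), abs_lt.1 (hy.trans_lt h)⟩
  have hcompact : HasCompactSupport fun z : ℝ × ℝ ↦ f (z.1 • b 0 + z.2 • b 1) :=
    .intro (isCompact_Icc.prod isCompact_Icc) fun z hz ↦
      hout z fun h ↦ hz (prod_mono Ioo_subset_Icc_self Ioo_subset_Icc_self h)
  have hcont : Continuous fun z : ℝ × ℝ ↦ f (z.1 • b 0 + z.2 • b 1) := by fun_prop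
  exact integral_prod_eq_intervalIntegral (hcont.integrable_of_hasCompactSupport hcompact)
    (by linarith) (by linarith) fun z hz ↦
      hout z fun h ↦ hz (prod_mono Ioo_subset_Ioc_self Ioo_subset_Ioc_self h)

theorem four_pi_mul_integral_sq_le_sq_integral_norm_fderiv (hE : finrank ℝ E = 2) {f : E → ℝ}
    (hf : ContDiff ℝ 1 f) (hfc : HasCompactSupport f) (hf0 : ∀ x, 0 ≤ f x) :
    4 * π * ∫ x, f x ^ 2 ≤ (∫ x, ‖fderiv ℝ f x‖) ^ 2 := by
  let b : OrthonormalBasis (Fin 2) ℝ E := (stdOrthonormalBasis ℝ E).reindex (finCongr hE)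
  let Φ : ℝ → ℝ → E := fun x y ↦ x • b 0 + y • b 1
  have hΦ : Continuous (uncurry Φ) := by fun_prop
  have hf' : Continuous (fderiv ℝ f) := hf.continuous_fderiv one_ne_zero
  obtain ⟨r, hr, hball⟩ := hfc.isCompact.isBounded.subset_ball_lt 0 0
  have hout : ∀ x, r ≤ ‖x‖ → x ∉ tsupport f := fun x hx h ↦
    (mem_ball_zero_iff.1 (hball h)).not_ge hx
  have hf_out : ∀ x, r ≤ ‖x‖ → f x = 0 := fun x hx ↦
    image_eq_zero_of_notMem_tsupport (hout x hx)
  have hf'_out : ∀ x, r ≤ ‖x‖ → fderiv ℝ f x = 0 := fun x hx ↦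
    image_eq_zero_of_notMem_tsupport fun h ↦ hout x hx (tsupport_fderiv_subset ℝ h)
  have hnorm (x : E) : ‖fderiv ℝ f x‖ = √(fderiv ℝ f x (b 0) ^ 2 + fderiv ℝ f x (b 1) ^ 2) := by
    rw [← sqrt_sq (norm_nonneg _), b.norm_dual, Fin.sum_univ_two]
  rw [integral_eq_intervalIntegral_orthonormalBasis b (by fun_prop) hr.le
      fun x hx ↦ by simp [hf_out x hx],
    integral_eq_intervalIntegral_orthonormalBasis b hf'.norm hr.le
      fun x hx ↦ by simp [hf'_out x hx]]
  simp only [hnorm]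
  have hΦ_out (x y : ℝ) (h : r ≤ |x| ∨ r ≤ |y|) : f (Φ x y) = 0 :=
    hf_out _ (h.elim (·.trans (abs_le_norm_smul_add_smul b x y).1)
      (·.trans (abs_le_norm_smul_add_smul b x y).2))
  refine four_pi_mul_integral_sq_le_of_rectangle (F := fun x y ↦ f (Φ x y))
    (p := fun x y ↦ fderiv ℝ f (Φ x y) (b 0)) (q := fun x y ↦ fderiv ℝ f (Φ x y) (b 1))
    (by linarith) (by linarith) (hf.continuous.comp hΦ)
    ((hf'.comp hΦ).clm_apply continuous_const) ((hf'.comp hΦ).clm_apply continuous_const)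
    (fun x y ↦ ?_) (fun x y ↦ ?_) (fun _ _ ↦ hf0 _) ?_ ?_ ?_ ?_
  · exact (hf.differentiable one_ne_zero _).hasFDerivAt.comp_hasDerivAt x
      (by simpa using ((hasDerivAt_id x).smul_const (b 0)).add_const (y • b 1) :
        HasDerivAt (fun x ↦ x • b 0 + y • b 1) (b 0) x)
  · exact (hf.differentiable one_ne_zero _).hasFDerivAt.comp_hasDerivAt y
      (by simpa using ((hasDerivAt_id y).smul_const (b 1)).const_add (x • b 0) :
        HasDerivAt (fun y ↦ x • b 0 + y • b 1) (b 1) y)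
  all_goals exact fun t ↦ hΦ_out _ _ (by simp [le_abs_self])

end Plane

/-! ### Green's identity and the energy of level sets -/

section Energy

lemma integrable_mul_of_hasCompactSupport {X : Type*} [TopologicalSpace X] [MeasurableSpace X]
    [OpensMeasurableSpace X] {μ : Measure X} [IsFiniteMeasureOnCompacts μ] {φ ψ : X → ℝ}
    (hφ : Continuous φ) (hφc : HasCompactSupport φ) (hψ : ∀ x ∈ tsupport φ, ContinuousAt ψ x) :
    Integrable (fun x ↦ φ x * ψ x) μ := by
  refine Continuous.integrable_of_hasCompactSupport (continuous_of_tsupport fun x hx ↦ ?_)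
    hφc.mul_right
  exact hφ.continuousAt.mul (hψ x (tsupport_mul_subset_left hx))

lemma sq_integral_mul_le_integral_mul_integral_mul_sq {X : Type*} [MeasurableSpace X]
    {μ : Measure X} {w n : X → ℝ} (hw0 : 0 ≤ w) (hw : Integrable w μ)
    (hwn : Integrable (fun x ↦ w x * n x) μ) (hwn2 : Integrable (fun x ↦ w x * n x ^ 2) μ) :
    (∫ x, w x * n x ∂μ) ^ 2 ≤ (∫ x, w x ∂μ) * ∫ x, w x * n x ^ 2 ∂μ := by
  have hquad (r : ℝ) : 0 ≤ (∫ x, w x ∂μ) * (r * r) + -(2 * ∫ x, w x * n x ∂μ) * r +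
      ∫ x, w x * n x ^ 2 ∂μ := by
    have hexpand : ∫ x, w x * (n x - r) ^ 2 ∂μ =
        ∫ x, (w x * (r * r) - w x * n x * (2 * r) + w x * n x ^ 2) ∂μ :=
      integral_congr_ae (.of_forall fun x ↦ by ring)
    have hsub : Integrable (fun x ↦ w x * (r * r) - w x * n x * (2 * r)) μ :=
      (hw.mul_const _).sub (hwn.mul_const _)
    rw [integral_add hsub hwn2,
      integral_sub (hw.mul_const _) (hwn.mul_const _), integral_mul_const, integral_mul_const]
      at hexpand
    have hnonneg : 0 ≤ ∫ x, w x * (n x - r) ^ 2 ∂μ :=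
      integral_nonneg fun x ↦ mul_nonneg (hw0 x) (sq_nonneg _)
    linarith
  have hdiscrim := discrim_le_zero hquad
  rw [discrim] at hdiscrim
  linarith

variable {E : Type*} [NormedAddCommGroup E] [InnerProductSpace ℝ E]

lemma continuousAt_fderiv_fderiv_apply {u : E → ℝ} {x : E} (hu : ContDiffAt ℝ 2 u x) (v w : E) :
    ContinuousAt (fun x ↦ fderiv ℝ (fderiv ℝ u) x v w) x := by
  have hcont := ((hu.fderiv_right (m := 1) (by norm_num)).fderiv_right (m := 0)
    (by norm_num)).continuousAt
  exact (hcont.clm_apply continuousAt_const).clm_apply continuousAt_const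

lemma inner_gradient_eq_fderiv [CompleteSpace E] (f : E → ℝ) (x v : E) :
    ⟪∇ f x, v⟫_ℝ = fderiv ℝ f x v :=
  InnerProductSpace.toDual_symm_apply

variable [FiniteDimensional ℝ E]

lemma laplacian_eq_sum_fderiv_fderiv {ι : Type*} [Fintype ι] (b : OrthonormalBasis ι ℝ E)
    (u : E → ℝ) (x : E) : Δ u x = ∑ i, fderiv ℝ (fderiv ℝ u) x (b i) (b i) := by
  simp [InnerProductSpace.laplacian_eq_iteratedFDeriv_orthonormalBasis u b,
    iteratedFDeriv_two_apply]

lemma continuousAt_laplacian {u : E → ℝ} {x : E} (hu : ContDiffAt ℝ 2 u x) :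
    ContinuousAt (Δ u) x := by
  rw [funext (laplacian_eq_sum_fderiv_fderiv (stdOrthonormalBasis ℝ E) u)]
  exact tendsto_finsetSum _ fun i _ ↦ continuousAt_fderiv_fderiv_apply hu _ _

variable [MeasurableSpace E] [BorelSpace E]

lemma integrable_fderiv_mul_fderiv {f u : E → ℝ} (hf : ContDiff ℝ 1 f) (hfc : HasCompactSupport f)
    (hu : ∀ x ∈ tsupport f, ContDiffAt ℝ 1 u x) (v : E) :
    Integrable fun x ↦ fderiv ℝ f x v * fderiv ℝ u x v :=
  integrable_mul_of_hasCompactSupport ((hf.continuous_fderiv one_ne_zero).clm_apply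
    continuous_const) (hfc.fderiv_apply ℝ v) fun x hx ↦
      ((hu x (tsupport_fderiv_apply_subset ℝ v hx)).continuousAt_fderiv one_ne_zero).clm_apply
        continuousAt_const

lemma integral_fderiv_mul_fderiv_eq_neg {f u : E → ℝ} (hf : ContDiff ℝ 1 f)
    (hfc : HasCompactSupport f) (hu : ∀ x ∈ tsupport f, ContDiffAt ℝ 2 u x) (v : E) :
    ∫ x, fderiv ℝ f x v * fderiv ℝ u x v = -∫ x, f x * fderiv ℝ (fderiv ℝ u) x v v := by
  have hu' : ∀ x ∈ tsupport f, ContDiffAt ℝ 1 (fderiv ℝ u) x := fun x hx ↦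
    (hu x hx).fderiv_right (by norm_num)
  have hderiv (x : E) : f x * fderiv ℝ (fun y ↦ fderiv ℝ u y v) x v =
      f x * fderiv ℝ (fderiv ℝ u) x v v := by
    by_cases hx : x ∈ tsupport f
    · rw [fderiv_clm_apply ((hu' x hx).differentiableAt one_ne_zero) (by fun_prop)]
      simp
    · simp [image_eq_zero_of_notMem_tsupport hx]
  simp only [← hderiv]
  rw [integral_mul_fderiv_eq_neg_fderiv_mul_of_integrable (f := f)
    (g := fun y ↦ fderiv ℝ u y v), neg_neg]
  · exact integrable_fderiv_mul_fderiv hf hfc (fun x hx ↦ (hu x hx).of_le (by norm_num)) v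
  · simp only [hderiv]
    exact integrable_mul_of_hasCompactSupport hf.continuous hfc fun x hx ↦
      continuousAt_fderiv_fderiv_apply (hu x hx) v v
  · exact integrable_mul_of_hasCompactSupport hf.continuous hfc fun x hx ↦
      (hu' x hx).continuousAt.clm_apply continuousAt_const
  · exact fun x _ ↦ hf.differentiable one_ne_zero x
  · exact fun x hx ↦ ((hu' x hx).differentiableAt one_ne_zero).clm_apply (by fun_prop)

theorem integral_inner_gradient_eq_neg_integral_mul_laplacian {f u : E → ℝ} (hf : ContDiff ℝ 1 f)
    (hfc : HasCompactSupport f) (hu : ∀ x ∈ tsupport f, ContDiffAt ℝ 2 u x) :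
    ∫ x, ⟪∇ f x, ∇ u x⟫_ℝ = -∫ x, f x * Δ u x := by
  let b := stdOrthonormalBasis ℝ E
  simp only [← b.sum_inner_mul_inner (∇ f _) (∇ u _), real_inner_comm (∇ u _) (b _),
    inner_gradient_eq_fderiv, laplacian_eq_sum_fderiv_fderiv b, Finset.mul_sum]
  rw [integral_finsetSum _ fun i _ ↦ integrable_fderiv_mul_fderiv hf hfc
      (fun x hx ↦ (hu x hx).of_le (by norm_num)) (b i),
    integral_finsetSum _ fun i _ ↦ integrable_mul_of_hasCompactSupport hf.continuous hfc
      fun x hx ↦ continuousAt_fderiv_fderiv_apply (hu x hx) (b i) (b i),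
    Finset.sum_congr rfl fun i _ ↦ integral_fderiv_mul_fderiv_eq_neg hf hfc hu (b i),
    Finset.sum_neg_distrib]

end Energy

lemma nonneg_of_monotone_of_eqOn_Iic {g : ℝ → ℝ} {t : ℝ} (hgm : Monotone g) (hgt : EqOn g 0 (Iic t))
    (s : ℝ) : 0 ≤ g s := by
  rcases le_total s t with hs | hs
  · exact (hgt hs).ge
  · exact (hgt self_mem_Iic).ge.trans (hgm hs)

lemma deriv_eq_zero_of_eqOn_Iic {g : ℝ → ℝ} {t s : ℝ} (hg : DifferentiableAt ℝ g s)
    (hgt : EqOn g 0 (Iic t)) (hs : s ≤ t) : deriv g s = 0 :=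
  (uniqueDiffOn_Iic t s hs).eq_deriv _ hg.hasDerivAt.hasDerivWithinAt
    ((hasDerivWithinAt_const s (Iic t) (0 : ℝ)).congr hgt (hgt hs))

lemma tsupport_comp_subset_of_eqOn_Iic {X : Type*} [TopologicalSpace X] {g : ℝ → ℝ} {u : X → ℝ}
    {t : ℝ} (hu : Continuous u) (hgt : EqOn g 0 (Iic t)) : tsupport (g ∘ u) ⊆ {x | t ≤ u x} :=
  closure_minimal (fun x hx ↦ le_of_not_ge fun hle : u x ≤ t ↦ hx (hgt hle))
    (isClosed_le continuous_const hu)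

section Truncation

variable {E : Type*} [NormedAddCommGroup E] [NormedSpace ℝ E] {g : ℝ → ℝ} {u : E → ℝ} {t : ℝ}

lemma contDiff_comp_of_eqOn_Iic {n : WithTop ℕ∞} (hg : ContDiff ℝ n g) (hgt : EqOn g 0 (Iic t))
    (hu : Continuous u) (hun : ∀ x, t ≤ u x → ContDiffAt ℝ n u x) : ContDiff ℝ n (g ∘ u) := by
  refine contDiff_iff_contDiffAt.mpr fun x ↦ ?_
  by_cases hx : x ∈ tsupport (g ∘ u)
  · exact hg.contDiffAt.comp x (hun x (tsupport_comp_subset_of_eqOn_Iic hu hgt hx))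
  · exact contDiffAt_const.congr_of_eventuallyEq (notMem_tsupport_iff_eventuallyEq.mp hx)

lemma fderiv_comp_of_eqOn_Iic (hg : Differentiable ℝ g) (hgt : EqOn g 0 (Iic t))
    (hu : Continuous u) (hu1 : ∀ x, t ≤ u x → DifferentiableAt ℝ u x) (x : E) :
    fderiv ℝ (g ∘ u) x = deriv g (u x) • fderiv ℝ u x := by
  rcases le_or_gt t (u x) with hx | hx
  · exact ((hg (u x)).hasDerivAt.comp_hasFDerivAt x (hu1 x hx).hasFDerivAt).fderiv
  · rw [fderiv_of_notMem_tsupport ℝ fun hmem ↦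
        hx.not_ge (tsupport_comp_subset_of_eqOn_Iic hu hgt hmem),
      deriv_eq_zero_of_eqOn_Iic (hg _) hgt hx.le, zero_smul]

end Truncation

section Superlevel

variable {E : Type*} [NormedAddCommGroup E] [InnerProductSpace ℝ E] [FiniteDimensional ℝ E]
  [MeasurableSpace E] [BorelSpace E] {u : E → ℝ} {g : ℝ → ℝ} {t : ℝ}

lemma integral_deriv_comp_mul_sq_norm_fderiv_eq (hg : ContDiff ℝ 1 g) (hgt : EqOn g 0 (Iic t))
    (ht : 0 ≤ t) (hu : Continuous u) (huc : HasCompactSupport u)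
    (hu2 : ∀ x, t ≤ u x → ContDiffAt ℝ 2 u x) :
    ∫ x, deriv g (u x) * ‖fderiv ℝ u x‖ ^ 2 = -∫ x, g (u x) * Δ u x := by
  have hu1 (x : E) (hx : t ≤ u x) : ContDiffAt ℝ 1 u x := (hu2 x hx).of_le (by norm_num)
  have hinner (x : E) :
      deriv g (u x) * ‖fderiv ℝ u x‖ ^ 2 = ⟪∇ (g ∘ u) x, ∇ u x⟫_ℝ := by
    have hnorm : ‖fderiv ℝ u x‖ = ‖∇ u x‖ := (LinearIsometryEquiv.norm_map _ _).symm
    rw [inner_gradient_eq_fderiv, fderiv_comp_of_eqOn_Iic (hg.differentiable one_ne_zero) hgt hu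
        (fun x hx ↦ (hu1 x hx).differentiableAt one_ne_zero), smul_apply, smul_eq_mul,
      ← inner_gradient_eq_fderiv, real_inner_self_eq_norm_sq, hnorm]
  simp only [hinner]
  exact integral_inner_gradient_eq_neg_integral_mul_laplacian
    (contDiff_comp_of_eqOn_Iic hg hgt hu hu1) (huc.comp_left (hgt ht))
    fun x hx ↦ hu2 x (tsupport_comp_subset_of_eqOn_Iic hu hgt hx)

lemma integral_deriv_comp_mul_sq_norm_fderiv_le {lam : ℝ} (hg : ContDiff ℝ 1 g)
    (hg0 : ∀ s, 0 ≤ g s) (hgt : EqOn g 0 (Iic t)) (ht : 0 ≤ t) (hu : Continuous u)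
    (huc : HasCompactSupport u) (hu2 : ∀ x, t ≤ u x → ContDiffAt ℝ 2 u x)
    (hΔ : ∀ x, t ≤ u x → -(lam * u x) ≤ Δ u x) :
    ∫ x, deriv g (u x) * ‖fderiv ℝ u x‖ ^ 2 ≤ lam * ∫ x, g (u x) * u x := by
  have hfc : HasCompactSupport (g ∘ u) := huc.comp_left (hgt ht)
  rw [integral_deriv_comp_mul_sq_norm_fderiv_eq hg hgt ht hu huc hu2, ← integral_neg,
    ← integral_const_mul]
  refine integral_mono
    (integrable_mul_of_hasCompactSupport (hg.continuous.comp hu) hfc fun x hx ↦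
      continuousAt_laplacian (hu2 x (tsupport_comp_subset_of_eqOn_Iic hu hgt hx))).neg
    ((integrable_mul_of_hasCompactSupport (hg.continuous.comp hu) hfc fun x _ ↦
      hu.continuousAt).const_mul _) fun x ↦ ?_
  change -(g (u x) * Δ u x) ≤ lam * (g (u x) * u x)
  rcases le_or_gt t (u x) with hx | hx
  · linarith [mul_le_mul_of_nonneg_left (hΔ x hx) (hg0 (u x))]
  · simp [hgt hx.le]

lemma sq_integral_norm_fderiv_comp_le {lam : ℝ} (hg : ContDiff ℝ 1 g) (hgm : Monotone g)
    (hgt : EqOn g 0 (Iic t)) (ht : 0 ≤ t) (hu : Continuous u) (huc : HasCompactSupport u)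
    (hu2 : ∀ x, t ≤ u x → ContDiffAt ℝ 2 u x) (hΔ : ∀ x, t ≤ u x → -(lam * u x) ≤ Δ u x) :
    (∫ x, ‖fderiv ℝ (g ∘ u) x‖) ^ 2 ≤ lam * (∫ x, g (u x) * u x) * ∫ x, deriv g (u x) := by
  have hg't : EqOn (deriv g) 0 (Iic t) := fun s hs ↦
    deriv_eq_zero_of_eqOn_Iic (hg.differentiable one_ne_zero s) hgt hs
  have hw : Continuous (deriv g ∘ u) := (hg.continuous_deriv le_rfl).comp hu
  have hwc : HasCompactSupport (deriv g ∘ u) := huc.comp_left (hg't ht)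
  have hnorm (x : E) (hx : x ∈ tsupport (deriv g ∘ u)) :
      ContinuousAt (fun x ↦ ‖fderiv ℝ u x‖) x :=
    ((hu2 x (tsupport_comp_subset_of_eqOn_Iic hu hg't hx)).continuousAt_fderiv two_ne_zero).norm
  calc (∫ x, ‖fderiv ℝ (g ∘ u) x‖) ^ 2
      = (∫ x, deriv g (u x) * ‖fderiv ℝ u x‖) ^ 2 := by
        simp only [fderiv_comp_of_eqOn_Iic (hg.differentiable one_ne_zero) hgt hu
          (fun x hx ↦ (hu2 x hx).differentiableAt two_ne_zero), norm_smul,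
          norm_of_nonneg hgm.deriv_nonneg]
    _ ≤ (∫ x, deriv g (u x)) * ∫ x, deriv g (u x) * ‖fderiv ℝ u x‖ ^ 2 :=
        sq_integral_mul_le_integral_mul_integral_mul_sq (fun _ ↦ hgm.deriv_nonneg)
          (hw.integrable_of_hasCompactSupport hwc)
          (integrable_mul_of_hasCompactSupport hw hwc hnorm)
          (integrable_mul_of_hasCompactSupport hw hwc fun x hx ↦ (hnorm x hx).pow 2)
    _ ≤ (∫ x, deriv g (u x)) * (lam * ∫ x, g (u x) * u x) :=
        mul_le_mul_of_nonneg_left (integral_deriv_comp_mul_sq_norm_fderiv_le hg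
          (nonneg_of_monotone_of_eqOn_Iic hgm hgt) hgt ht hu huc hu2 hΔ)
          (integral_nonneg fun _ ↦ hgm.deriv_nonneg)
    _ = lam * (∫ x, g (u x) * u x) * ∫ x, deriv g (u x) := mul_comm _ _

lemma four_pi_mul_integral_comp_sq_le {lam : ℝ} (hE : finrank ℝ E = 2) (hg : ContDiff ℝ 1 g)
    (hgm : Monotone g) (hgt : EqOn g 0 (Iic t)) (ht : 0 ≤ t) (hu : Continuous u)
    (huc : HasCompactSupport u) (hu2 : ∀ x, t ≤ u x → ContDiffAt ℝ 2 u x)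
    (hΔ : ∀ x, t ≤ u x → -(lam * u x) ≤ Δ u x) :
    4 * π * ∫ x, g (u x) ^ 2 ≤ lam * (∫ x, g (u x) * u x) * ∫ x, deriv g (u x) :=
  (four_pi_mul_integral_sq_le_sq_integral_norm_fderiv hE
    (contDiff_comp_of_eqOn_Iic hg hgt hu fun x hx ↦ (hu2 x hx).of_le (by norm_num))
    (huc.comp_left (hgt ht)) fun x ↦ nonneg_of_monotone_of_eqOn_Iic hgm hgt (u x)).trans
    (sq_integral_norm_fderiv_comp_le hg hgm hgt ht hu huc hu2 hΔ)

end Superlevel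

/-! ### Integration over levels -/

section Levels

lemma half_sq_sub_le_intervalIntegral_mul_smoothTransition_sq {ε s b : ℝ} (hε : 0 < ε)
    (hs : 0 ≤ s) (hsb : s ≤ b) :
    (s ^ 2 - 2 * ε * s) / 2 ≤ ∫ r in (0 : ℝ)..b, r * smoothTransition ((s - r) / ε) ^ 2 := by
  have hnonneg {a : ℝ} (ha : 0 ≤ a) (hab : a ≤ b) :
      0 ≤ ∫ r in a..b, r * smoothTransition ((s - r) / ε) ^ 2 :=
    intervalIntegral.integral_nonneg hab fun r hr ↦
      mul_nonneg (ha.trans hr.1) (sq_nonneg _)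
  rcases le_total s ε with hsε | hεs
  · have hmul : 0 ≤ s * (ε - s) := mul_nonneg hs (by linarith)
    nlinarith [hnonneg le_rfl (hs.trans hsb), mul_nonneg hs hε.le]
  · have hcont : Continuous fun r ↦ r * smoothTransition ((s - r) / ε) ^ 2 := by
      have := smoothTransition.continuous
      fun_prop
    have hone : ∫ r in (0 : ℝ)..(s - ε), r * smoothTransition ((s - r) / ε) ^ 2 =
        ∫ r in (0 : ℝ)..(s - ε), r := by
      refine intervalIntegral.integral_congr fun r hr ↦ ?_
      rw [uIcc_of_le (by linarith)] at hr
      have hle : 1 ≤ (s - r) / ε := (one_le_div₀ hε).mpr (by linarith [hr.2])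
      simp [smoothTransition.one_of_one_le hle]
    rw [← intervalIntegral.integral_add_adjacent_intervals (b := s - ε)
      (hcont.intervalIntegrable _ _) (hcont.intervalIntegrable _ _), hone, integral_id]
    linarith [hnonneg (a := s - ε) (by linarith) (by linarith), sq_nonneg ε]

variable {φ : ℝ → ℝ} {X : Type*} [TopologicalSpace X] [MeasurableSpace X] [OpensMeasurableSpace X]
  {μ : Measure X} [IsFiniteMeasureOnCompacts μ] {u : X → ℝ}

lemma hasDerivAt_integral_comp_sub_mul (hφ : ContDiff ℝ 1 φ) (hu : Continuous u)
    (huc : HasCompactSupport u) (t : ℝ) :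
    HasDerivAt (fun t ↦ ∫ x, φ (u x - t) * u x ∂μ) (-∫ x, deriv φ (u x - t) * u x ∂μ) t := by
  have := hφ.continuous
  have := hφ.continuous_deriv le_rfl
  rw [← integral_neg]
  refine hasDerivAt_parametric_integral_of_continuous (F := fun t x ↦ φ (u x - t) * u x)
    (F' := fun t x ↦ -(deriv φ (u x - t) * u x)) (by fun_prop) (by fun_prop) (fun t x ↦ ?_)
    huc.isCompact (isClosed_tsupport u).measurableSet
    (fun t x hx ↦ by simp [image_eq_zero_of_notMem_tsupport hx]) t
  rw [← neg_mul]
  exact ((hφ.differentiable one_ne_zero _).hasDerivAt.comp_const_sub (u x) t).mul_const _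

lemma mul_integral_deriv_comp_sub_le (hφ : ContDiff ℝ 1 φ) (hφm : Monotone φ)
    (hφ0 : EqOn φ 0 (Iic 0)) (hu : Continuous u) (huc : HasCompactSupport u) {t : ℝ}
    (ht : 0 ≤ t) :
    t * ∫ x, deriv φ (u x - t) ∂μ ≤ ∫ x, deriv φ (u x - t) * u x ∂μ := by
  have hφ'0 (s : ℝ) (hs : s ≤ 0) : deriv φ s = 0 :=
    deriv_eq_zero_of_eqOn_Iic (hφ.differentiable one_ne_zero s) hφ0 hs
  have hcont : Continuous fun x ↦ deriv φ (u x - t) :=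
    (hφ.continuous_deriv le_rfl).comp (hu.sub continuous_const)
  have hcpt : HasCompactSupport fun x ↦ deriv φ (u x - t) :=
    huc.comp_left (g := fun s ↦ deriv φ (s - t)) (hφ'0 _ (by linarith))
  rw [← integral_const_mul]
  refine integral_mono ((hcont.integrable_of_hasCompactSupport hcpt).const_mul _)
    ((hcont.mul hu).integrable_of_hasCompactSupport hcpt.mul_right) fun x ↦ ?_
  change t * deriv φ (u x - t) ≤ deriv φ (u x - t) * u x
  rcases le_total (u x - t) 0 with hx | hx
  · simp [hφ'0 _ hx]
  · rw [mul_comm]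
    exact mul_le_mul_of_nonneg_left (by linarith) hφm.deriv_nonneg

lemma hasDerivAt_setIntegral_intervalIntegral_mul_sq (hφ : Continuous φ) (hu : Continuous u)
    {s : Set X} (hs : IsCompact s) (hsm : MeasurableSet s) (t : ℝ) :
    HasDerivAt (fun t ↦ ∫ x in s, (∫ r in (0 : ℝ)..t, r * φ (u x - r) ^ 2) ∂μ)
      (∫ x in s, t * φ (u x - t) ^ 2 ∂μ) t := by
  have hcont (x : X) : Continuous fun r ↦ r * φ (u x - r) ^ 2 := by fun_prop
  exact hasDerivAt_parametric_setIntegral_of_continuous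
    (F := fun t x ↦ ∫ r in (0 : ℝ)..t, r * φ (u x - r) ^ 2)
    (F' := fun t x ↦ t * φ (u x - t) ^ 2)
    (intervalIntegral.continuous_parametric_intervalIntegral_of_continuous (by fun_prop)
      continuous_fst) (by fun_prop)
    (fun t x ↦ ((hcont x).integral_hasStrictDerivAt 0 t).hasDerivAt) hs hsm t

lemma mul_setIntegral_mul_comp_sub_sq_le {κ lam t : ℝ} (hφ : ContDiff ℝ 1 φ) (hφm : Monotone φ)
    (hφ0 : EqOn φ 0 (Iic 0)) (hu : Continuous u) (huc : HasCompactSupport u) (hlam : 0 ≤ lam)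
    (ht : 0 < t) (hlevel : κ * ∫ x, φ (u x - t) ^ 2 ∂μ ≤
      lam * (∫ x, φ (u x - t) * u x ∂μ) * ∫ x, deriv φ (u x - t) ∂μ) :
    κ * ∫ x in tsupport u, t * φ (u x - t) ^ 2 ∂μ ≤
      lam * (∫ x, φ (u x - t) * u x ∂μ) * ∫ x, deriv φ (u x - t) * u x ∂μ := by
  have hset : ∫ x in tsupport u, φ (u x - t) ^ 2 ∂μ = ∫ x, φ (u x - t) ^ 2 ∂μ :=
    setIntegral_eq_integral_of_forall_compl_eq_zero fun x hx ↦ by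
      simp [image_eq_zero_of_notMem_tsupport hx, hφ0 (neg_nonpos.mpr ht.le)]
  have hW : 0 ≤ ∫ x, φ (u x - t) * u x ∂μ := integral_nonneg fun x ↦ by
    rcases le_total (u x - t) 0 with hx | hx
    · simp [hφ0 hx]
    · exact mul_nonneg (nonneg_of_monotone_of_eqOn_Iic hφm hφ0 _) (by linarith)
  rw [integral_const_mul, hset]
  linarith [mul_le_mul_of_nonneg_left hlevel ht.le, mul_le_mul_of_nonneg_left
    (mul_integral_deriv_comp_sub_le (μ := μ) hφ hφm hφ0 hu huc ht.le) (mul_nonneg hlam hW)]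

lemma mul_setIntegral_intervalIntegral_mul_sq_le {κ lam b : ℝ} (hφ : ContDiff ℝ 1 φ)
    (hφm : Monotone φ) (hφ0 : EqOn φ 0 (Iic 0)) (hu : Continuous u) (huc : HasCompactSupport u)
    (hlam : 0 ≤ lam) (hb : 0 ≤ b)
    (hlevel : ∀ t > 0, κ * ∫ x, φ (u x - t) ^ 2 ∂μ ≤
      lam * (∫ x, φ (u x - t) * u x ∂μ) * ∫ x, deriv φ (u x - t) ∂μ) :
    κ * ∫ x in tsupport u, (∫ r in (0 : ℝ)..b, r * φ (u x - r) ^ 2) ∂μ ≤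
      lam / 2 * (∫ x, φ (u x) * u x ∂μ) ^ 2 := by
  let W (t : ℝ) : ℝ := ∫ x, φ (u x - t) * u x ∂μ
  let V (t : ℝ) : ℝ := ∫ x, deriv φ (u x - t) * u x ∂μ
  let H (t : ℝ) : ℝ := ∫ x in tsupport u, (∫ r in (0 : ℝ)..t, r * φ (u x - r) ^ 2) ∂μ
  have hderiv (t : ℝ) : HasDerivAt (fun t ↦ κ * H t + lam / 2 * W t ^ 2)
      (κ * ∫ x in tsupport u, t * φ (u x - t) ^ 2 ∂μ + lam / 2 * (2 * W t * -V t)) t := by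
    have hH : HasDerivAt H (∫ x in tsupport u, t * φ (u x - t) ^ 2 ∂μ) t :=
      hasDerivAt_setIntegral_intervalIntegral_mul_sq hφ.continuous hu huc.isCompact
        (isClosed_tsupport u).measurableSet t
    have hW : HasDerivAt W (-V t) t := hasDerivAt_integral_comp_sub_mul hφ hu huc t
    exact ((hH.const_mul κ).add ((hW.pow 2).const_mul (lam / 2))).congr_deriv (by simp)
  have hderiv_nonpos (t : ℝ) (ht : 0 < t) :
      κ * ∫ x in tsupport u, t * φ (u x - t) ^ 2 ∂μ + lam / 2 * (2 * W t * -V t) ≤ 0 := by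
    linarith [mul_setIntegral_mul_comp_sub_sq_le hφ hφm hφ0 hu huc hlam ht (hlevel t ht)]
  have hanti : AntitoneOn (fun t ↦ κ * H t + lam / 2 * W t ^ 2) (Ici 0) :=
    antitoneOn_of_hasDerivWithinAt_nonpos (convex_Ici 0)
      (fun t _ ↦ (hderiv t).continuousAt.continuousWithinAt)
      (fun t _ ↦ (hderiv t).hasDerivWithinAt)
      fun t ht ↦ hderiv_nonpos t (by simpa using ht)
  have hb0 : κ * H b + lam / 2 * W b ^ 2 ≤ κ * H 0 + lam / 2 * W 0 ^ 2 :=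
    hanti self_mem_Ici hb hb
  have hWb : 0 ≤ lam / 2 * W b ^ 2 := by positivity
  simp only [H, W, intervalIntegral.integral_same, integral_zero, sub_zero] at hb0 hWb ⊢
  linarith

lemma half_integral_sq_sub_le_setIntegral {ε b : ℝ} (hε : 0 < ε) (hu : Continuous u)
    (huc : HasCompactSupport u) (hu0 : ∀ x, 0 ≤ u x) (hub : ∀ x, u x ≤ b) :
    (∫ x, u x ^ 2 ∂μ - 2 * ε * ∫ x, u x ∂μ) / 2 ≤
      ∫ x in tsupport u, (∫ r in (0 : ℝ)..b, r * smoothTransition ((u x - r) / ε) ^ 2) ∂μ := by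
  have hui : Integrable u μ := hu.integrable_of_hasCompactSupport huc
  have hu2i : Integrable (fun x ↦ u x ^ 2) μ :=
    (hu.pow 2).integrable_of_hasCompactSupport (huc.comp_left (zero_pow two_ne_zero))
  have hsupp : ∫ x in tsupport u, (u x ^ 2 - 2 * ε * u x) / 2 ∂μ =
      ∫ x, (u x ^ 2 - 2 * ε * u x) / 2 ∂μ :=
    setIntegral_eq_integral_of_forall_compl_eq_zero fun x hx ↦ by
      simp [image_eq_zero_of_notMem_tsupport hx]
  have hcont : Continuous fun x ↦ ∫ r in (0 : ℝ)..b, r * smoothTransition ((u x - r) / ε) ^ 2 :=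
    have := smoothTransition.continuous
    intervalIntegral.continuous_parametric_intervalIntegral_of_continuous' (by fun_prop) 0 b
  rw [← integral_const_mul, ← integral_sub hu2i (hui.const_mul _), ← integral_div, ← hsupp]
  exact integral_mono ((hu2i.sub (hui.const_mul _)).div_const 2).integrableOn
    (hcont.continuousOn.integrableOn_compact' huc (isClosed_tsupport u).measurableSet) fun x ↦
      half_sq_sub_le_intervalIntegral_mul_smoothTransition_sq hε (hu0 x) (hub x)

lemma mul_half_integral_sq_sub_le {κ lam ε : ℝ} (hκ : 0 ≤ κ) (hlam : 0 ≤ lam) (hε : 0 < ε)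
    (hu : Continuous u) (huc : HasCompactSupport u) (hu0 : ∀ x, 0 ≤ u x)
    (hlevel : ∀ φ : ℝ → ℝ, ContDiff ℝ 1 φ → Monotone φ → EqOn φ 0 (Iic 0) → ∀ t > 0,
      κ * ∫ x, φ (u x - t) ^ 2 ∂μ ≤
        lam * (∫ x, φ (u x - t) * u x ∂μ) * ∫ x, deriv φ (u x - t) ∂μ) :
    κ * ((∫ x, u x ^ 2 ∂μ - 2 * ε * ∫ x, u x ∂μ) / 2) ≤ lam / 2 * (∫ x, u x ∂μ) ^ 2 := by
  let φ (s : ℝ) : ℝ := smoothTransition (s / ε)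
  have hφ : ContDiff ℝ 1 φ := smoothTransition.contDiff.comp (contDiff_id.div_const ε)
  have hφm : Monotone φ := fun r s hrs ↦
    smoothTransition.monotone (div_le_div_of_nonneg_right hrs hε.le)
  have hφ0 : EqOn φ 0 (Iic 0) := fun s hs ↦
    smoothTransition.zero_of_nonpos (div_nonpos_of_nonpos_of_nonneg hs hε.le)
  obtain ⟨b, hb, hub⟩ := (hu.bddAbove_range_of_hasCompactSupport huc).exists_ge 0
  calc κ * ((∫ x, u x ^ 2 ∂μ - 2 * ε * ∫ x, u x ∂μ) / 2)
      ≤ κ * ∫ x in tsupport u, (∫ r in (0 : ℝ)..b, r * φ (u x - r) ^ 2) ∂μ :=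
        mul_le_mul_of_nonneg_left (half_integral_sq_sub_le_setIntegral hε hu huc hu0
          fun x ↦ hub _ (mem_range_self x)) hκ
    _ ≤ lam / 2 * (∫ x, φ (u x) * u x ∂μ) ^ 2 :=
        mul_setIntegral_intervalIntegral_mul_sq_le hφ hφm hφ0 hu huc hlam hb
          (hlevel φ hφ hφm hφ0)
    _ ≤ lam / 2 * (∫ x, u x ∂μ) ^ 2 := by
        gcongr
        · exact integral_nonneg fun x ↦ mul_nonneg (smoothTransition.nonneg _) (hu0 x)
        · exact ((hφ.continuous.comp hu).mul hu).integrable_of_hasCompactSupport huc.mul_left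
        · exact hu.integrable_of_hasCompactSupport huc
        · exact fun x ↦ mul_le_of_le_one_left (hu0 x) (smoothTransition.le_one _)

theorem mul_integral_sq_le_of_forall_level {κ lam : ℝ} (hκ : 0 ≤ κ) (hlam : 0 ≤ lam)
    (hu : Continuous u) (huc : HasCompactSupport u) (hu0 : ∀ x, 0 ≤ u x)
    (hlevel : ∀ φ : ℝ → ℝ, ContDiff ℝ 1 φ → Monotone φ → EqOn φ 0 (Iic 0) → ∀ t > 0,
      κ * ∫ x, φ (u x - t) ^ 2 ∂μ ≤
        lam * (∫ x, φ (u x - t) * u x ∂μ) * ∫ x, deriv φ (u x - t) ∂μ) :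
    κ * ∫ x, u x ^ 2 ∂μ ≤ lam * (∫ x, u x ∂μ) ^ 2 := by
  have hlim : Tendsto (fun ε ↦ κ * ((∫ x, u x ^ 2 ∂μ - 2 * ε * ∫ x, u x ∂μ) / 2)) (𝓝[>] 0)
      (𝓝 (κ * ((∫ x, u x ^ 2 ∂μ - 2 * 0 * ∫ x, u x ∂μ) / 2))) :=
    (Continuous.tendsto (by fun_prop) 0).mono_left nhdsWithin_le_nhds
  have hle := le_of_tendsto hlim <| eventually_mem_nhdsWithin.mono fun ε hε ↦
    mul_half_integral_sq_sub_le hκ hlam hε hu huc hu0 hlevel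
  linarith

end Levels

/-! ### The eigenfunction inequality -/

theorem four_pi_mul_integral_sq_le_of_neg_mul_le_laplacian {E : Type*} [NormedAddCommGroup E]
    [InnerProductSpace ℝ E] [FiniteDimensional ℝ E] [MeasurableSpace E] [BorelSpace E]
    (hE : finrank ℝ E = 2) {lam : ℝ} (hlam : 0 ≤ lam) {u : E → ℝ} (hu : Continuous u)
    (huc : HasCompactSupport u) (hu0 : ∀ x, 0 ≤ u x)
    (hu2 : ∀ x, 0 < u x → ContDiffAt ℝ 2 u x) (hΔ : ∀ x, 0 < u x → -(lam * u x) ≤ Δ u x) :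
    4 * π * ∫ x, u x ^ 2 ≤ lam * (∫ x, u x) ^ 2 := by
  refine mul_integral_sq_le_of_forall_level (by positivity) hlam hu huc hu0
    fun φ hφ hφm hφ0 t ht ↦ ?_
  simpa only [deriv_comp_sub_const] using
    four_pi_mul_integral_comp_sq_le (g := fun s ↦ φ (s - t)) hE
      (hφ.comp (contDiff_id.sub contDiff_const))
      (hφm.comp fun r s hrs ↦ sub_le_sub_right hrs t)
      (fun s hs ↦ hφ0 (mem_Iic.mpr (sub_nonpos.mpr hs))) ht.le hu huc
      (fun x hx ↦ hu2 x (ht.trans_le hx)) fun x hx ↦ hΔ x (ht.trans_le hx)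

lemma lap_eq_laplacian (u : EuclideanSpace ℝ (Fin 2) → ℝ) : lap u = Δ u := by
  ext x
  simp [lap, laplacian_eq_sum_fderiv_fderiv (EuclideanSpace.basisFun (Fin 2) ℝ) u x]

theorem eigenfunction_isoperimetric_inequality_general {O : Set (EuclideanSpace ℝ (Fin 2))}
    (hO : IsOpen O) (hb : Bornology.IsBounded O) {lam : ℝ} (hlam : 0 ≤ lam)
    {u : EuclideanSpace ℝ (Fin 2) → ℝ} (hcont : ContinuousOn u (closure O))
    (hC2 : ContDiffOn ℝ 2 u O) (hpde : ∀ x ∈ O, -(lam * u x) ≤ lap u x)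
    (hnonneg : ∀ x ∈ O, 0 ≤ u x) (hbd : ∀ x ∈ frontier O, u x = 0) :
    ∫ x in O, u x ^ 2 ≤ (lam / (4 * π)) * (∫ x in O, u x) ^ 2 := by
  have heq (x : EuclideanSpace ℝ (Fin 2)) (hx : x ∈ O) : O.indicator u =ᶠ[𝓝 x] u :=
    eqOn_indicator.eventuallyEq_of_mem (hO.mem_nhds hx)
  have hmem (x : EuclideanSpace ℝ (Fin 2)) (hx : 0 < O.indicator u x) : x ∈ O :=
    mem_of_indicator_ne_zero hx.ne'
  have hmain := four_pi_mul_integral_sq_le_of_neg_mul_le_laplacian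
    (finrank_euclideanSpace_fin (𝕜 := ℝ)) hlam (u := O.indicator u)
    (continuous_indicator hbd hcont)
    (.of_support_subset_isCompact hb.isCompact_closure
      (support_indicator_subset.trans subset_closure))
    (indicator_nonneg hnonneg)
    (fun x hx ↦ (hC2.contDiffAt (hO.mem_nhds (hmem x hx))).congr_of_eventuallyEq
      (heq x (hmem x hx)))
    fun x hx ↦ by
      rw [(InnerProductSpace.laplacian_congr_nhds (heq x (hmem x hx))).eq_of_nhds,
        indicator_of_mem (hmem x hx), ← lap_eq_laplacian]
      exact hpde x (hmem x hx)
  have hsq : (fun x ↦ O.indicator u x ^ 2) = O.indicator fun x ↦ u x ^ 2 := by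
    ext x
    by_cases hx : x ∈ O <;> simp [hx]
  rw [hsq, integral_indicator hO.measurableSet, integral_indicator hO.measurableSet] at hmain
  rwa [div_mul_eq_mul_div, le_div_iff₀' (by positivity)]

theorem eigenfunction_isoperimetric_inequality
    (O : Set (EuclideanSpace ℝ (Fin 2))) (hne : O.Nonempty) (hO : IsOpen O)
    (hb : Bornology.IsBounded O) (hsb : SmoothBoundary O)
    (hsc : SimplyConnectedSpace O)
    (lam : ℝ) (hlam : 0 < lam)
    (u : EuclideanSpace ℝ (Fin 2) → ℝ)
    (hcont : ContinuousOn u (closure O)) (hC1 : ContDiffOn ℝ 1 u (closure O))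
    (hC2 : ContDiffOn ℝ 2 u O)
    (hpde : ∀ x ∈ O, lap u x = -(lam * u x)) (hpos : ∀ x ∈ O, 0 < u x)
    (hbd : ∀ x ∈ frontier O, u x = 0) :
    ∫ x in O, u x ^ 2 ≤ (lam / (4 * π)) * (∫ x in O, u x) ^ 2 :=
  eigenfunction_isoperimetric_inequality_general hO hb hlam.le hcont hC2
    (fun x hx ↦ (hpde x hx).ge) (fun x hx ↦ (hpos x hx).le) hbd
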